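/- For every ξ ∈ ℝ with |ξ| < 1 and every η ∈ [-1, 1], the series Σ_{n=0}^{∞} P_n(η) ξⁿ converges and its sum equals (1 - 2ξη + ξ²)^{-1/2}; that is, (1 - 2ξη + ξ²)^{-1/2} is the generating function of the Legendre polynomials. -/

import Mathlib

open Polynomial

/-- The n-th Legendre polynomial, defined via the Rodrigues formula
P_n(eta) = (1/(2^n n!)) d^n/d eta^n (eta^2 - 1)^n. -/
noncomputable def legendre (n : ℕ) : Polynomial ℝ :=
  ((1 : ℝ) / (2 ^ n * n.factorial)) • (Polynomial.derivative^[n] ((X ^ 2 - 1) ^ n))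

/-!
Write `G = ∑ Pₙ Tⁿ` as a formal power series over `ℝ[X]`. Bonnet's recurrence for the Legendre
polynomials, a consequence of Rodrigues' formula, says that `(1 - 2XT + T²) G' = (X - T) G`. Hence
`(1 - 2XT + T²) G²` has zero derivative and is equal to `1`. Specialising `X` to `η = cos θ` and
factoring `1 - 2ηT + T² = (1 - wT)(1 - vT)` with `w = exp(iθ)` and `v` its conjugate, uniqueness
of square roots gives `G = (1 - wT)^(-1/2) (1 - vT)^(-1/2)`. As `|w| = 1`, both binomial series
converge absolutely for `|ξ| < 1`, and the product of their sums is
`|1 - wξ|⁻¹ = (1 - 2ξη + ξ²)^(-1/2)`.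
-/

section IterateDerivative

variable {R : Type*} [CommRing R]

theorem iterate_derivative_succ_X_sq_sub_one_pow_succ (n k : ℕ) :
    derivative^[k + 1] ((X ^ 2 - 1 : R[X]) ^ (n + 1)) =
      2 * ((n : R[X]) + 1) * derivative^[k] ((X ^ 2 - 1) ^ n * X) := by
  have chain_rule : derivative ((X ^ 2 - 1 : R[X]) ^ (n + 1)) =
      ((2 * (n + 1) : ℕ) : R[X]) * ((X ^ 2 - 1) ^ n * X) := by
    rw [derivative_pow_succ, derivative_sub, derivative_X_pow, derivative_one]
    simp only [map_add, map_natCast, map_one, Nat.cast_ofNat, C_ofNat]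
    push_cast
    ring
  rw [Function.iterate_succ_apply, chain_rule, iterate_derivative_natCast_mul]
  push_cast
  rfl

theorem iterate_derivative_X_sq_sub_one_pow_succ (n : ℕ) :
    derivative^[n + 1] ((X ^ 2 - 1 : R[X]) ^ (n + 1)) =
      2 * (X ^ 2 - 1) * derivative^[n + 1] ((X ^ 2 - 1) ^ n) +
        2 * ((n : R[X]) + 1) * X * derivative^[n] ((X ^ 2 - 1) ^ n) := by
  have chain_rule := iterate_derivative_succ_X_sq_sub_one_pow_succ (R := R) n n
  have product_rule : derivative^[n + 1] ((X ^ 2 - 1 : R[X]) ^ (n + 1)) =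
      derivative^[n + 1] ((X ^ 2 - 1) ^ n * X * X) - derivative^[n + 1] ((X ^ 2 - 1) ^ n) := by
    rw [← iterate_derivative_sub]
    ring_nf
  simp only [iterate_derivative_mul_X, Nat.add_sub_cancel, nsmul_eq_mul] at chain_rule product_rule
  push_cast at product_rule
  -- The derivatives of order `n - 1` cancel in this combination.
  linear_combination 2 * product_rule - chain_rule

end IterateDerivative

theorem two_pow_mul_factorial_mul_legendre (n : ℕ) :
    ((2 ^ n * n.factorial : ℕ) : ℝ[X]) * legendre n = derivative^[n] ((X ^ 2 - 1) ^ n) := by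
  have scalar_ne_zero : (2 ^ n * n.factorial : ℝ) ≠ 0 := by positivity
  rw [legendre, ← nsmul_eq_mul, ← Nat.cast_smul_eq_nsmul ℝ, smul_smul]
  push_cast
  rw [mul_one_div_cancel scalar_ne_zero, one_smul]

theorem two_pow_mul_factorial_mul_derivative_legendre (n : ℕ) :
    ((2 ^ n * n.factorial : ℕ) : ℝ[X]) * derivative (legendre n) =
      derivative^[n + 1] ((X ^ 2 - 1) ^ n) := by
  rw [← derivative_natCast_mul, two_pow_mul_factorial_mul_legendre, Function.iterate_succ_apply']

theorem derivative_legendre_succ (n : ℕ) :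
    derivative (legendre (n + 1)) =
      X * derivative (legendre n) + ((n : ℝ[X]) + 1) * legendre n := by
  have scalar_ne_zero : ((2 ^ (n + 1) * (n + 1).factorial : ℕ) : ℝ[X]) ≠ 0 :=
    Nat.cast_ne_zero.mpr (by positivity)
  have rodrigues := iterate_derivative_succ_X_sq_sub_one_pow_succ (R := ℝ) n (n + 1)
  rw [iterate_derivative_mul_X, Nat.add_sub_cancel, nsmul_eq_mul,
    ← two_pow_mul_factorial_mul_derivative_legendre,
    ← two_pow_mul_factorial_mul_derivative_legendre,
    ← two_pow_mul_factorial_mul_legendre] at rodrigues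
  apply mul_left_cancel₀ scalar_ne_zero
  rw [rodrigues, Nat.factorial_succ]
  push_cast
  ring

theorem succ_mul_legendre_succ (n : ℕ) :
    ((n : ℝ[X]) + 1) * legendre (n + 1) =
      (X ^ 2 - 1) * derivative (legendre n) + ((n : ℝ[X]) + 1) * X * legendre n := by
  have scalar_ne_zero : ((2 ^ (n + 1) * n.factorial : ℕ) : ℝ[X]) ≠ 0 :=
    Nat.cast_ne_zero.mpr (by positivity)
  have rodrigues := iterate_derivative_X_sq_sub_one_pow_succ (R := ℝ) n
  rw [← two_pow_mul_factorial_mul_derivative_legendre, ← two_pow_mul_factorial_mul_legendre,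
    ← two_pow_mul_factorial_mul_legendre, Nat.factorial_succ] at rodrigues
  apply mul_left_cancel₀ scalar_ne_zero
  push_cast at rodrigues ⊢
  linear_combination rodrigues

theorem legendre_bonnet_recurrence (n : ℕ) :
    ((n : ℝ[X]) + 2) * legendre (n + 2) =
      (2 * (n : ℝ[X]) + 3) * X * legendre (n + 1) - ((n : ℝ[X]) + 1) * legendre n := by
  have recurrence := succ_mul_legendre_succ (n + 1)
  push_cast at recurrence
  linear_combination recurrence + (X ^ 2 - 1) * derivative_legendre_succ n
    - X * succ_mul_legendre_succ n

theorem legendre_zero : legendre 0 = 1 := by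
  simp [legendre]

theorem legendre_one : legendre 1 = X := by
  simpa [legendre_zero] using succ_mul_legendre_succ 0

section PowerSeries

open scoped PowerSeries

theorem coeff_X_mul_derivative {R : Type*} [CommSemiring R] (f : R⟦X⟧) (n : ℕ) :
    PowerSeries.coeff n (PowerSeries.X * PowerSeries.derivative R f) =
      n * PowerSeries.coeff n f := by
  cases n with
  | zero => simp
  | succ n =>
    rw [PowerSeries.coeff_succ_X_mul, PowerSeries.coeff_derivative, mul_comm, Nat.cast_succ]

theorem eq_of_sq_eq_sq_of_constantCoeff_eq_one {R : Type*} [CommRing R] [IsDomain R]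
    [NeZero (2 : R)] {f g : R⟦X⟧} (hsq : f ^ 2 = g ^ 2)
    (hf : PowerSeries.constantCoeff f = 1) (hg : PowerSeries.constantCoeff g = 1) : f = g := by
  refine (sq_eq_sq_iff_eq_or_eq_neg.mp hsq).resolve_right fun f_eq_neg ↦ ?_
  have one_eq_neg_one : (1 : R) = -1 := by
    simpa only [map_neg, hf, hg] using congrArg PowerSeries.constantCoeff f_eq_neg
  exact two_ne_zero (α := R) (by linear_combination one_eq_neg_one)

/-- The formal power series `(1 - c X)^(-1/2)`, the square root of `(1 - c X)⁻¹` with constant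
coefficient `1`, obtained from the binomial series of `(1 + X)^(-1/2)` by rescaling. -/
noncomputable def invSqrtOneSubSeries (c : ℂ) : ℂ⟦X⟧ :=
  PowerSeries.rescale (-c) (PowerSeries.binomialSeries ℂ (-1 / 2 : ℂ))

theorem constantCoeff_invSqrtOneSubSeries (c : ℂ) :
    PowerSeries.constantCoeff (invSqrtOneSubSeries c) = 1 := by
  rw [invSqrtOneSubSeries, ← PowerSeries.coeff_zero_eq_constantCoeff_apply,
    PowerSeries.coeff_rescale, PowerSeries.coeff_zero_eq_constantCoeff_apply,
    PowerSeries.binomialSeries_constantCoeff, pow_zero, one_mul]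

theorem one_sub_C_mul_X_mul_invSqrtOneSubSeries_sq (c : ℂ) :
    (1 - PowerSeries.C c * PowerSeries.X) * invSqrtOneSubSeries c ^ 2 = 1 := by
  have unscaled : (1 + PowerSeries.X) * PowerSeries.binomialSeries ℂ (-1 / 2 : ℂ) ^ 2 = 1 := by
    rw [sq, ← PowerSeries.binomialSeries_add, ← pow_one (1 + PowerSeries.X),
      ← PowerSeries.binomialSeries_nat (R := ℂ), ← PowerSeries.binomialSeries_add]
    norm_num
  simpa [invSqrtOneSubSeries, PowerSeries.rescale_X, sub_eq_add_neg] using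
    congrArg (PowerSeries.rescale (-c)) unscaled

/-- The ordinary generating function `∑ Pₙ Tⁿ` of the Legendre polynomials, as a formal power
series in `T` over the polynomial ring. -/
noncomputable def legendreGenFun : ℝ[X]⟦X⟧ :=
  PowerSeries.mk legendre

theorem coeff_legendreGenFun (n : ℕ) : PowerSeries.coeff n legendreGenFun = legendre n :=
  PowerSeries.coeff_mk n legendre

theorem constantCoeff_legendreGenFun : PowerSeries.constantCoeff legendreGenFun = 1 := by
  rw [← PowerSeries.coeff_zero_eq_constantCoeff_apply, coeff_legendreGenFun, legendre_zero]

theorem quadratic_mul_derivative_legendreGenFun :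
    (1 - PowerSeries.C (2 * X) * PowerSeries.X + PowerSeries.X ^ 2) *
        PowerSeries.derivative ℝ[X] legendreGenFun =
      (PowerSeries.C X - PowerSeries.X) * legendreGenFun := by
  set T : ℝ[X]⟦X⟧ := PowerSeries.X
  set G' := PowerSeries.derivative ℝ[X] legendreGenFun
  suffices G' + T * (T * G') + T * legendreGenFun =
      PowerSeries.C (2 * X) * (T * G') + PowerSeries.C X * legendreGenFun by
    linear_combination this
  ext1 n
  cases n with
  | zero =>
    simp only [T, G', map_add, PowerSeries.coeff_C_mul, PowerSeries.coeff_zero_X_mul,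
      PowerSeries.coeff_derivative, coeff_legendreGenFun, zero_add, legendre_zero,
      legendre_one]
    push_cast
    ring
  | succ n =>
    simp only [T, G', map_add, PowerSeries.coeff_C_mul, PowerSeries.coeff_succ_X_mul,
      coeff_X_mul_derivative, PowerSeries.coeff_derivative, coeff_legendreGenFun]
    push_cast
    linear_combination legendre_bonnet_recurrence n

theorem quadratic_mul_legendreGenFun_sq :
    (1 - PowerSeries.C (2 * X) * PowerSeries.X + PowerSeries.X ^ 2) * legendreGenFun ^ 2 = 1 := by
  apply PowerSeries.derivative.ext
  · have C_two_mul : PowerSeries.C (2 * X : ℝ[X]) = 2 * PowerSeries.C X := by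
      rw [map_mul, map_ofNat]
    simp only [Derivation.leibniz, Derivation.leibniz_pow, map_add, map_sub, smul_eq_mul,
      nsmul_eq_mul, PowerSeries.derivative_X, PowerSeries.derivative_C, PowerSeries.derivative_one]
    push_cast
    linear_combination 2 * legendreGenFun * quadratic_mul_derivative_legendreGenFun -
      legendreGenFun ^ 2 * C_two_mul
  · simp [constantCoeff_legendreGenFun]

theorem quadratic_mul_map_aeval_legendreGenFun_sq (η : ℂ) :
    (1 - PowerSeries.C (2 * η) * PowerSeries.X + PowerSeries.X ^ 2) *
      PowerSeries.map (aeval (R := ℝ) η : ℝ[X] →+* ℂ) legendreGenFun ^ 2 = 1 := by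
  have mapped_identity := congrArg (PowerSeries.map (aeval (R := ℝ) η : ℝ[X] →+* ℂ))
    quadratic_mul_legendreGenFun_sq
  simpa only [map_mul, map_add, map_sub, map_pow, map_one, PowerSeries.map_C, PowerSeries.map_X,
    RingHom.coe_coe, aeval_X, map_ofNat] using mapped_identity

theorem one_sub_C_mul_X_mul_one_sub_C_mul_X {R : Type*} [CommRing R] (w v : R) :
    (1 - PowerSeries.C w * PowerSeries.X) * (1 - PowerSeries.C v * PowerSeries.X) =
      1 - PowerSeries.C (w + v) * PowerSeries.X + PowerSeries.C (w * v) * PowerSeries.X ^ 2 := by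
  rw [map_add, map_mul]
  ring

theorem map_aeval_legendreGenFun {w v η : ℂ} (hmul : w * v = 1) (hadd : w + v = 2 * η) :
    PowerSeries.map (aeval (R := ℝ) η : ℝ[X] →+* ℂ) legendreGenFun =
      invSqrtOneSubSeries w * invSqrtOneSubSeries v := by
  have factorization := one_sub_C_mul_X_mul_one_sub_C_mul_X w v
  rw [hmul, hadd, map_one, one_mul] at factorization
  have quadratic_mul_sq :
      (1 - PowerSeries.C (2 * η) * PowerSeries.X + PowerSeries.X ^ 2) *
        (invSqrtOneSubSeries w * invSqrtOneSubSeries v) ^ 2 = 1 := by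
    rw [← factorization, mul_pow, mul_mul_mul_comm,
      one_sub_C_mul_X_mul_invSqrtOneSubSeries_sq, one_sub_C_mul_X_mul_invSqrtOneSubSeries_sq,
      one_mul]
  apply eq_of_sq_eq_sq_of_constantCoeff_eq_one
  · exact left_inv_eq_right_inv
      ((mul_comm _ _).trans (quadratic_mul_map_aeval_legendreGenFun_sq η)) quadratic_mul_sq
  · rw [← PowerSeries.coeff_zero_eq_constantCoeff_apply, PowerSeries.coeff_map,
      coeff_legendreGenFun, legendre_zero, map_one]
  · rw [map_mul, constantCoeff_invSqrtOneSubSeries, constantCoeff_invSqrtOneSubSeries, one_mul]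

theorem hasSum_coeff_mul_pow_mul {R : Type*} [NormedCommRing R] [CompleteSpace R] {f g : R⟦X⟧}
    {z a b : R} (hf : HasSum (fun n ↦ PowerSeries.coeff n f * z ^ n) a)
    (hf_norm : Summable fun n ↦ ‖PowerSeries.coeff n f * z ^ n‖)
    (hg : HasSum (fun n ↦ PowerSeries.coeff n g * z ^ n) b)
    (hg_norm : Summable fun n ↦ ‖PowerSeries.coeff n g * z ^ n‖) :
    HasSum (fun n ↦ PowerSeries.coeff n (f * g) * z ^ n) (a * b) := by
  have cauchy_product :=
    (summable_norm_sum_mul_antidiagonal_of_summable_norm hf_norm hg_norm).of_norm.hasSum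
  rw [← tsum_mul_tsum_eq_tsum_sum_antidiagonal_of_summable_norm hf_norm hg_norm, hf.tsum_eq,
    hg.tsum_eq] at cauchy_product
  refine cauchy_product.congr_fun fun n ↦ ?_
  rw [PowerSeries.coeff_mul, Finset.sum_mul]
  refine Finset.sum_congr rfl fun ⟨i, j⟩ hij ↦ ?_
  rw [← Finset.HasAntidiagonal.mem_antidiagonal.mp hij]
  ring

theorem hasSum_coeff_binomialSeries (a : ℂ) {z : ℂ} (hz : ‖z‖ < 1) :
    HasSum (fun n ↦ PowerSeries.coeff n (PowerSeries.binomialSeries ℂ a) * z ^ n)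
      ((1 + z) ^ a) := by
  have z_mem_ball : z ∈ Metric.eball (0 : ℂ) 1 := by simpa [← ofReal_norm] using hz
  simpa [mul_comm, binomialSeries, FormalMultilinearSeries.coeff_ofScalars] using
    Complex.one_add_cpow_hasFPowerSeriesOnBall_zero (a := a).hasSum z_mem_ball

theorem hasSum_coeff_invSqrtOneSubSeries {c z : ℂ} (hcz : ‖c * z‖ < 1) :
    HasSum (fun n ↦ PowerSeries.coeff n (invSqrtOneSubSeries c) * z ^ n)
      ((1 - c * z) ^ (-1 / 2 : ℂ)) := by
  have binomial := hasSum_coeff_binomialSeries (-1 / 2) (z := -c * z) (by simpa using hcz)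
  rw [neg_mul, ← sub_eq_add_neg, ← neg_mul] at binomial
  refine binomial.congr_fun fun n ↦ ?_
  rw [invSqrtOneSubSeries, PowerSeries.coeff_rescale, mul_pow]
  ring

end PowerSeries

theorem hasSum_aeval_legendre {w v η z : ℂ} (hmul : w * v = 1) (hadd : w + v = 2 * η)
    (hw : ‖w * z‖ < 1) (hv : ‖v * z‖ < 1) :
    HasSum (fun n ↦ aeval η (legendre n) * z ^ n)
      ((1 - w * z) ^ (-1 / 2 : ℂ) * (1 - v * z) ^ (-1 / 2 : ℂ)) := by
  have sum_w := hasSum_coeff_invSqrtOneSubSeries hw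
  have sum_v := hasSum_coeff_invSqrtOneSubSeries hv
  have sum_product := hasSum_coeff_mul_pow_mul sum_w sum_w.summable.norm sum_v sum_v.summable.norm
  rw [← map_aeval_legendreGenFun hmul hadd] at sum_product
  simpa only [PowerSeries.coeff_map, coeff_legendreGenFun] using! sum_product

open scoped ComplexConjugate

theorem cpow_mul_conj_cpow {z : ℂ} (hz : z.arg ≠ Real.pi) (a : ℝ) :
    z ^ (a : ℂ) * conj z ^ (a : ℂ) = ((‖z‖ ^ a) ^ 2 : ℝ) := by
  rw [Complex.conj_cpow _ _ hz, Complex.conj_ofReal, Complex.mul_conj', Complex.norm_cpow_real,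
    Complex.ofReal_pow]

theorem cpow_neg_half_mul_conj_cpow_neg_half {z : ℂ} (hz : z.arg ≠ Real.pi) :
    z ^ (-1 / 2 : ℂ) * conj z ^ (-1 / 2 : ℂ) = (‖z‖⁻¹ : ℝ) := by
  have cpow_eq_inv : z ^ (-1 / 2 : ℂ) * conj z ^ (-1 / 2 : ℂ) =
      ((‖z‖ ^ (-1 / 2 : ℝ)) ^ 2 : ℝ) := by
    simpa only [Complex.ofReal_div, Complex.ofReal_neg, Complex.ofReal_one, Complex.ofReal_ofNat]
      using cpow_mul_conj_cpow hz (-1 / 2)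
  rw [cpow_eq_inv, ← Real.rpow_mul_natCast (norm_nonneg z), Nat.cast_ofNat,
    div_mul_cancel₀ _ (two_ne_zero' ℝ), Real.rpow_neg_one]

theorem hasSum_eval_re_legendre {w : ℂ} (hw : ‖w‖ = 1) {ξ : ℝ} (hξ : |ξ| < 1) :
    HasSum (fun n ↦ (legendre n).eval w.re * ξ ^ n) ‖1 - w * ξ‖⁻¹ := by
  have norm_mul_lt_one : ‖w * ξ‖ < 1 := by simpa [hw] using hξ
  have arg_ne_pi : (1 - w * ξ).arg ≠ Real.pi := Complex.slitPlane_arg_ne_pi <| by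
    simpa [sub_eq_add_neg] using
      Complex.mem_slitPlane_of_norm_lt_one (z := -(w * ξ)) (by rwa [norm_neg])
  have complex_sum := hasSum_aeval_legendre (v := conj w) (η := w.re) (z := ξ)
    (by simp [Complex.mul_conj', hw]) (by simp [Complex.add_conj]) norm_mul_lt_one
    (by simpa [hw] using hξ)
  have conj_one_sub : conj (1 - w * ξ) = 1 - conj w * ξ := by
    rw [map_sub, map_one, map_mul, Complex.conj_ofReal]
  rw [← conj_one_sub, cpow_neg_half_mul_conj_cpow_neg_half arg_ne_pi] at complex_sum
  rw [← Complex.hasSum_ofReal]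
  refine complex_sum.congr_fun fun n ↦ ?_
  rw [Complex.ofReal_mul, Complex.ofReal_pow, ← Complex.coe_algebraMap,
    aeval_algebraMap_apply_eq_algebraMap_eval]

theorem norm_one_sub_mul_ofReal {w : ℂ} (hw : ‖w‖ = 1) (ξ : ℝ) :
    ‖1 - w * ξ‖ = √(1 - 2 * ξ * w.re + ξ ^ 2) := by
  have normSq_w : w.re * w.re + w.im * w.im = 1 := by
    rw [← Complex.normSq_apply, Complex.normSq_eq_norm_sq, hw, one_pow]
  rw [Complex.norm_def, Complex.normSq_apply]
  congr 1
  simp only [Complex.sub_re, Complex.one_re, Complex.re_mul_ofReal, Complex.sub_im, Complex.one_im,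
    Complex.im_mul_ofReal]
  linear_combination ξ ^ 2 * normSq_w

/-- (1 - 2 xi eta + xi^2)^(-1/2) is the generating function of the Legendre polynomials:
for |xi| < 1 and eta in [-1,1], the series Σ P_n(eta) xi^n converges to it. -/
theorem stmt_1 (ξ η : ℝ) (hξ : |ξ| < 1) (hη : η ∈ Set.Icc (-1 : ℝ) 1) :
    HasSum (fun n : ℕ => (legendre n).eval η * ξ ^ n)
      ((Real.sqrt (1 - 2 * ξ * η + ξ ^ 2))⁻¹) := by
  set w := Complex.exp (Real.arccos η * Complex.I)
  have norm_w : ‖w‖ = 1 := Complex.norm_exp_ofReal_mul_I _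
  have re_w : w.re = η := by
    rw [Complex.exp_ofReal_mul_I_re, Real.cos_arccos hη.1 hη.2]
  have sum_at_re := hasSum_eval_re_legendre norm_w hξ
  rwa [norm_one_sub_mul_ofReal norm_w, re_w] at sum_at_re
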